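/- arXiv:1902.03505 — 2 statements merged into one kernel-verified Lean document; each statement's English description precedes it below -/
import Mathlib

section
/- Let N ≥ 4 and let g : [0,1) → ℝ be 2⌊N/2⌋-times differentiable with g^{(k)}(t) ≥ 0 for all t ∈ [0,1) and all integers 0 ≤ k ≤ 2⌊N/2⌋ (g absolutely monotone up to 2⌊N/2⌋). Then X_N^(h) minimizes the energy Σ_{i≠j} g(|⟨x_i,x_j⟩|²) among all X ∈ S(N,2) whose vectors are pairwise non-parallel (|⟨x_i,x_j⟩| < 1 for all i ≠ j). If moreover g^{(k)}(t) > 0 for all t ∈ (0,1) and all 0 ≤ k ≤ 2⌊N/2⌋, then every minimizer is equivalent to X_N^(h). -/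
open scoped RealInnerProductSpace
open Real

/-- `X_N^(h)`: the `N`-tuple of unit vectors `(cos(kπ/N), sin(kπ/N))`, `k = 0,…,N−1`,
i.e. `N` equally spaced points on the half circle. -/
noncomputable def halfCircle (N : ℕ) : Fin N → EuclideanSpace ℝ (Fin 2) :=
  fun k => (WithLp.equiv 2 (Fin 2 → ℝ)).symm
    ![cos ((k : ℕ) * π / N), sin ((k : ℕ) * π / N)]

/-- Two configurations are equivalent if one is obtained from the other by an orthogonal
transformation, a permutation of the points, and sign switches. -/
def EquivConfig (d N : ℕ) (X Y : Fin N → EuclideanSpace ℝ (Fin d)) : Prop :=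
  ∃ (U : EuclideanSpace ℝ (Fin d) ≃ₗᵢ[ℝ] EuclideanSpace ℝ (Fin d))
    (σ : Equiv.Perm (Fin N)) (s : Fin N → ℝ),
    (∀ i, s i = 1 ∨ s i = -1) ∧ ∀ i, Y i = s i • U (X (σ i))

/-- The energy `Σ_{i≠j} g(|⟨x_i,x_j⟩|²)` of a tuple of unit vectors in `ℝ²`. -/
noncomputable def gEnergy (N : ℕ) (g : ℝ → ℝ)
    (X : Fin N → EuclideanSpace ℝ (Fin 2)) : ℝ :=
  ∑ i : Fin N, ∑ j : Fin N, if i ≠ j then g (|⟪X i, X j⟫| ^ 2) else 0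

/-!
The proof is a linear programming bound. Write `X_N^(h)` through polar angles, so that the energy
of a configuration is a sum of `g (cos² θ)` over the differences `θ` of angles. Let `p` interpolate
`g` to second order at the squared inner products `τ 0 < τ 1 < …` of `X_N^(h)`. By repeated use of
Rolle's theorem the signs of the derivatives of `g` give `p ≤ g` on `[0, 1)`, and show that `p` is
a nonnegative combination of the products `Q l ^ 2` and `Q l * Q (l + 1)`, where
`Q l = (t - τ 0) ⋯ (t - τ (l - 1))`.

The crucial point is that `Q l (cos² θ)` is positive definite, that is, a nonnegative combination
of functions `cos (k θ)`: up to a positive factor it is a product of cosines at an arithmetic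
progression of step `π / N` (times a further `cos θ` when `N` is even), and the `q`-binomial
theorem at `q = exp (2πi / N)` expands such a product with coefficients that are quotients of
products of sines of angles in `(0, π)`. Hence `p (cos² θ)` is a nonnegative combination of
`cos (2kθ)`, `0 ≤ k < N`. For `k ≠ 0` the sum of such a function over all pairs of points is
nonnegative, and it vanishes for `X_N^(h)`, so `X_N^(h)` minimizes the energy of `p` and therefore
that of `g`.

If all derivatives are positive, then `p < g` off the nodes, so every squared inner product of a
minimizer is some `τ l` and all its angle differences are multiples of `π / N`.
-/

open Finset Polynomial Lagrange
open scoped NNReal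

/-- `F 1, …, F n` are the successive derivatives of `F 0` within `S`. -/
def IsDerivSeqOn (n : ℕ) (F : ℕ → ℝ → ℝ) (S : Set ℝ) : Prop :=
  ∀ k < n, ∀ x ∈ S, HasDerivWithinAt (F k) (F (k + 1) x) S x

section Rolle

variable {S : Set ℝ}

lemma exists_mem_Ioo_deriv_eq_zero (hS : S.OrdConnected) {f f' : ℝ → ℝ}
    (hf : ∀ x ∈ S, HasDerivWithinAt f (f' x) S x) {a b : ℝ} (ha : a ∈ S) (hb : b ∈ S)
    (hab : a < b) (hfab : f a = f b) : ∃ x ∈ Set.Ioo a b, x ∈ interior S ∧ f' x = 0 := by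
  have hIcc : Set.Icc a b ⊆ S := hS.out ha hb
  have hIoo : Set.Ioo a b ⊆ interior S :=
    interior_maximal (Set.Ioo_subset_Icc_self.trans hIcc) isOpen_Ioo
  obtain ⟨x, hx, hfx⟩ := exists_hasDerivAt_eq_zero hab
    (fun x hx => ((hf x (hIcc hx)).mono hIcc).continuousWithinAt) hfab
    fun x hx => (hf x (interior_subset (hIoo hx))).hasDerivAt
      (mem_interior_iff_mem_nhds.1 (hIoo hx))
  exact ⟨x, hx, hIoo hx, hfx⟩

lemma exists_finset_deriv_eq_zero (hS : S.OrdConnected) {f f' : ℝ → ℝ}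
    (hf : ∀ x ∈ S, HasDerivWithinAt f (f' x) S x) {Z : Finset ℝ} (hZS : ↑Z ⊆ S)
    (hZ : ∀ z ∈ Z, f z = 0) :
    ∃ W : Finset ℝ, ↑W ⊆ interior S ∧ Disjoint W Z ∧ #Z ≤ #W + 1 ∧ ∀ w ∈ W, f' w = 0 := by
  suffices h : ∃ W : Finset ℝ, ↑W ⊆ interior S ∧ Disjoint W Z ∧ #Z ≤ #W + 1 ∧
      (∀ w ∈ W, f' w = 0) ∧ ∀ w ∈ W, ∃ z ∈ Z, w < z by
    obtain ⟨W, hWS, hWZ, hcard, hW, -⟩ := h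
    exact ⟨W, hWS, hWZ, hcard, hW⟩
  induction Z using Finset.induction_on_max with
  | empty => exact ⟨∅, by simp⟩
  | insert a Z hmax ih =>
    rw [coe_insert, Set.insert_subset_iff] at hZS
    rw [forall_mem_insert] at hZ
    obtain ⟨W, hWS, hWZ, hcard, hW, hWlt⟩ := ih hZS.2 hZ.2
    have ha : a ∉ Z := fun h => (hmax a h).false
    obtain rfl | hne := Z.eq_empty_or_nonempty
    · exact ⟨∅, by simp⟩
    set b := Z.max' hne
    have hbZ : b ∈ Z := Z.max'_mem hne
    have hWb : ∀ w ∈ W, w < b := fun w hw =>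
      let ⟨z, hz, hwz⟩ := hWlt w hw
      hwz.trans_le (Z.le_max' z hz)
    obtain ⟨x, ⟨hbx, hxa⟩, hxS, hfx⟩ := exists_mem_Ioo_deriv_eq_zero hS hf (hZS.2 hbZ) hZS.1
      (hmax b hbZ) ((hZ.2 b hbZ).trans hZ.1.symm)
    have hxW : x ∉ W := fun h => (hWb x h).not_gt hbx
    have hxZ : x ∉ Z := fun h => (Z.le_max' x h).not_gt hbx
    have haW : a ∉ W := fun h => (hWb a h).not_gt (hbx.trans hxa)
    refine ⟨insert x W, ?_, ?_, ?_, ?_, ?_⟩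
    · rw [coe_insert]
      exact Set.insert_subset hxS hWS
    · simp only [disjoint_insert_left, disjoint_insert_right, mem_insert, not_or]
      exact ⟨⟨hxa.ne', haW⟩, hxZ, hWZ⟩
    · rw [card_insert_of_notMem ha, card_insert_of_notMem hxW]
      lia
    · exact (forall_mem_insert _ _ _).2 ⟨hfx, hW⟩
    · refine (forall_mem_insert _ _ _).2 ⟨⟨a, mem_insert_self _ _, hxa⟩, fun w hw => ?_⟩
      exact ⟨b, mem_insert_of_mem hbZ, hWb w hw⟩

end Rolle

namespace IsDerivSeqOn

variable {S : Set ℝ} {n : ℕ} {F : ℕ → ℝ → ℝ}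

lemma mono (hF : IsDerivSeqOn n F S) {m : ℕ} (hmn : m ≤ n) : IsDerivSeqOn m F S :=
  fun k hk => hF k (hk.trans_le hmn)

lemma tail (hF : IsDerivSeqOn (n + 1) F S) : IsDerivSeqOn n (fun k => F (k + 1)) S :=
  fun k hk => hF (k + 1) (by lia)

lemma sub_polynomial (hF : IsDerivSeqOn n F S) (p : ℝ[X]) :
    IsDerivSeqOn n (fun k x => F k x - (derivative^[k] p).eval x) S := by
  intro k hk x hx
  simp only [Function.iterate_succ_apply']
  exact (hF k hk x hx).sub (Polynomial.hasDerivWithinAt _ x S)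

lemma exists_eq_zero (hS : S.OrdConnected) (hF : IsDerivSeqOn n F S) {Z : Finset ℝ}
    (hZS : ↑Z ⊆ S) (hZ : ∀ z ∈ Z, F 0 z = 0) (hcard : n < #Z) :
    ∃ ξ ∈ S, F n ξ = 0 ∧ (n ≠ 0 → ξ ∈ interior S) := by
  induction n generalizing F Z with
  | zero =>
    obtain ⟨z, hz⟩ := card_pos.1 hcard
    exact ⟨z, hZS hz, hZ z hz, fun h => (h rfl).elim⟩
  | succ n ih =>
    obtain ⟨W, hWS, -, hWcard, hW⟩ := exists_finset_deriv_eq_zero hS (hF 0 n.succ_pos) hZS hZ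
    obtain rfl | hn := eq_or_ne n 0
    · obtain ⟨w, hw⟩ := card_pos.1 (show 0 < #W by lia)
      exact ⟨w, interior_subset (hWS hw), hW w hw, fun _ => hWS hw⟩
    · obtain ⟨ξ, hξS, hξ, hint⟩ := ih hF.tail (hWS.trans interior_subset) hW (by lia)
      exact ⟨ξ, hξS, hξ, fun _ => hint hn⟩

lemma exists_eq_zero_of_double_zeros (hS : S.OrdConnected) (hF : IsDerivSeqOn n F S)
    {Z D : Finset ℝ} (hZS : ↑Z ⊆ S) (hDZ : D ⊆ Z) (hZ : ∀ z ∈ Z, F 0 z = 0)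
    (hD : ∀ z ∈ D, F 1 z = 0) (hcard : n < #Z + #D) :
    ∃ ξ ∈ S, F n ξ = 0 ∧ (2 ≤ n → ξ ∈ interior S) := by
  obtain _ | n := n
  · have hZpos : 0 < #Z := by
      have := card_le_card hDZ
      lia
    obtain ⟨ξ, hξS, hξ, -⟩ := hF.exists_eq_zero hS hZS hZ hZpos
    exact ⟨ξ, hξS, hξ, by lia⟩
  · obtain ⟨W, hWS, hWZ, hWcard, hW⟩ := exists_finset_deriv_eq_zero hS (hF 0 n.succ_pos) hZS hZ
    have hWD : Disjoint W D := hWZ.mono_right hDZ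
    have hWDS : ↑(W ∪ D) ⊆ S := by
      rw [coe_union]
      exact Set.union_subset (hWS.trans interior_subset) ((coe_subset.2 hDZ).trans hZS)
    obtain ⟨ξ, hξS, hξ, hint⟩ := hF.tail.exists_eq_zero hS hWDS
      (fun z hz => (mem_union.1 hz).elim (hW z) (hD z)) (by rw [card_union_of_disjoint hWD]; lia)
    exact ⟨ξ, hξS, hξ, fun hn => hint (by lia)⟩

lemma exists_eq_factorial_mul_coeff (hS : S.OrdConnected) (hF : IsDerivSeqOn n F S) {p : ℝ[X]}
    (hp : p.natDegree ≤ n) {Z D : Finset ℝ} (hZS : ↑Z ⊆ S) (hDZ : D ⊆ Z)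
    (hZ : ∀ z ∈ Z, p.eval z = F 0 z) (hD : ∀ z ∈ D, p.derivative.eval z = F 1 z)
    (hcard : n < #Z + #D) :
    ∃ ξ ∈ S, F n ξ = n.factorial * p.coeff n ∧ (2 ≤ n → ξ ∈ interior S) := by
  obtain ⟨ξ, hξS, hξ, hint⟩ := (hF.sub_polynomial p).exists_eq_zero_of_double_zeros hS hZS hDZ
    (fun z hz => sub_eq_zero.2 (hZ z hz).symm) (fun z hz => sub_eq_zero.2 (hD z hz).symm) hcard
  have hconst : derivative^[n] p = C (n.factorial * p.coeff n) := by
    rw [eq_C_of_natDegree_le_zero ((natDegree_iterate_derivative p n).trans_eq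
      (Nat.sub_eq_zero_of_le hp)), coeff_iterate_derivative, zero_add, Nat.descFactorial_self,
      nsmul_eq_mul]
  refine ⟨ξ, hξS, ?_, hint⟩
  rw [sub_eq_zero.1 hξ, hconst, eval_C]

end IsDerivSeqOn

section Hermite

variable {ι : Type*} {s : Finset ι} {v : ι → ℝ} {S : Set ℝ} {F : ℕ → ℝ → ℝ} {p : ℝ[X]}

/-- `p` is the Hermite interpolant of `f` at the double nodes `v i`, `i ∈ s`: it has degree less
than `2 * #s`, and at these nodes it agrees with `f` and its derivative with `f'`, where `f'` is
meant to be the derivative of `f`. -/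
structure IsHermiteInterpolant (s : Finset ι) (v : ι → ℝ) (f f' : ℝ → ℝ) (p : ℝ[X]) : Prop where
  degree_lt : p.degree < (2 * #s : ℕ)
  eval_eq : ∀ i ∈ s, p.eval (v i) = f (v i)
  eval_derivative_eq : ∀ i ∈ s, p.derivative.eval (v i) = f' (v i)

lemma coeff_add_C_mul_of_degree_lt {n : ℕ} {q : ℝ[X]} (hp : p.degree < n) (hq : q.Monic)
    (hqn : q.natDegree = n) (c : ℝ) : (p + C c * q).coeff n = c := by
  rw [coeff_add, coeff_eq_zero_of_degree_lt hp, coeff_C_mul, ← hqn, hq.coeff_natDegree, zero_add,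
    mul_one]

lemma natDegree_add_C_mul_le_of_degree_lt {n : ℕ} {q : ℝ[X]} (hp : p.degree < n)
    (hqn : q.natDegree = n) (c : ℝ) : (p + C c * q).natDegree ≤ n :=
  natDegree_add_le_of_degree_le (natDegree_le_of_degree_le hp.le)
    ((natDegree_C_mul_le c q).trans hqn.le)

lemma natDegree_nodal_sq (s : Finset ι) (v : ι → ℝ) : (nodal s v ^ 2).natDegree = 2 * #s := by
  rw [natDegree_pow, natDegree_nodal]

lemma natDegree_nodal_mul_nodal_insert [DecidableEq ι] {i : ι} (hi : i ∉ s) (v : ι → ℝ) :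
    (nodal s v * nodal (insert i s) v).natDegree = 2 * #s + 1 := by
  rw [nodal_monic.natDegree_mul nodal_monic, natDegree_nodal, natDegree_nodal,
    card_insert_of_notMem hi]
  lia

namespace IsHermiteInterpolant

lemma exists_sub_eval_eq (hp : IsHermiteInterpolant s v (F 0) (F 1) p) (hS : S.OrdConnected)
    (hF : IsDerivSeqOn (2 * #s) F S) (hv : Set.InjOn v s) (hvS : ∀ i ∈ s, v i ∈ S) {t : ℝ}
    (ht : t ∈ S) (hts : ∀ i ∈ s, t ≠ v i) :
    ∃ ξ ∈ S, F 0 t - p.eval t = F (2 * #s) ξ / (2 * #s).factorial * (nodal s v).eval t ^ 2 ∧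
      (s.Nonempty → ξ ∈ interior S) := by
  classical
  have hQt : (nodal s v).eval t ^ 2 ≠ 0 := pow_ne_zero 2 (eval_nodal_not_at_node hts)
  set c : ℝ := (F 0 t - p.eval t) / (nodal s v).eval t ^ 2 with hc
  have hmonic : (nodal s v ^ 2).Monic := nodal_monic.pow 2
  have hcard : 2 * #s < #(insert t (s.image v)) + #(s.image v) := by
    rw [card_insert_of_notMem (by simpa only [mem_image, not_exists, not_and, eq_comm] using hts),
      card_image_of_injOn hv]
    lia
  have hZS : ↑(insert t (s.image v)) ⊆ S := by
    rw [coe_insert, coe_image]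
    exact Set.insert_subset ht (Set.image_subset_iff.2 hvS)
  obtain ⟨ξ, hξS, hξ, hint⟩ := hF.exists_eq_factorial_mul_coeff hS
    (natDegree_add_C_mul_le_of_degree_lt hp.degree_lt (natDegree_nodal_sq s v) c) hZS
    (subset_insert _ _) (by
      simp only [forall_mem_insert, forall_mem_image, eval_add, eval_mul, eval_C, eval_pow]
      refine ⟨by rw [hc, div_mul_cancel₀ _ hQt]; ring, fun i hi => ?_⟩
      rw [eval_nodal_at_node hi, hp.eval_eq i hi]
      ring) (by
      simp only [forall_mem_image, derivative_add, derivative_C_mul, derivative_sq, eval_add,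
        eval_mul, eval_C]
      intro i hi
      rw [eval_nodal_at_node hi, hp.eval_derivative_eq i hi]
      ring) hcard
  refine ⟨ξ, hξS, ?_, fun hs => hint (by have := hs.card_pos; lia)⟩
  rw [hξ, coeff_add_C_mul_of_degree_lt hp.degree_lt hmonic (natDegree_nodal_sq s v),
    mul_div_cancel_left₀ c (Nat.cast_ne_zero.2 (Nat.factorial_ne_zero _)), hc,
    div_mul_cancel₀ _ hQt]

lemma eval_le (hp : IsHermiteInterpolant s v (F 0) (F 1) p) (hS : S.OrdConnected)
    (hF : IsDerivSeqOn (2 * #s) F S) (hv : Set.InjOn v s) (hvS : ∀ i ∈ s, v i ∈ S)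
    (hpos : ∀ x ∈ S, 0 ≤ F (2 * #s) x) {t : ℝ} (ht : t ∈ S) : p.eval t ≤ F 0 t := by
  by_cases hts : ∃ i ∈ s, t = v i
  · obtain ⟨i, hi, rfl⟩ := hts
    exact (hp.eval_eq i hi).le
  · push Not at hts
    obtain ⟨ξ, hξS, hξ, -⟩ := hp.exists_sub_eval_eq hS hF hv hvS ht hts
    have := hpos ξ hξS
    exact sub_nonneg.1 (hξ ▸ by positivity)

lemma eval_lt (hp : IsHermiteInterpolant s v (F 0) (F 1) p) (hS : S.OrdConnected)
    (hF : IsDerivSeqOn (2 * #s) F S) (hv : Set.InjOn v s) (hvS : ∀ i ∈ s, v i ∈ S)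
    (hs : s.Nonempty) (hpos : ∀ x ∈ interior S, 0 < F (2 * #s) x) {t : ℝ} (ht : t ∈ S)
    (hts : ∀ i ∈ s, t ≠ v i) : p.eval t < F 0 t := by
  obtain ⟨ξ, -, hξ, hint⟩ := hp.exists_sub_eval_eq hS hF hv hvS ht hts
  have := hpos ξ (hint hs)
  have hQt : (nodal s v).eval t ≠ 0 := eval_nodal_not_at_node hts
  exact sub_pos.1 (hξ ▸ by positivity)

lemma exists_coeff_eq (hp : IsHermiteInterpolant s v (F 0) (F 1) p) (hS : S.OrdConnected) {k : ℕ}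
    (hk : #s = k + 1) (hF : IsDerivSeqOn (2 * k + 1) F S) (hv : Set.InjOn v s)
    (hvS : ∀ i ∈ s, v i ∈ S) :
    ∃ ξ ∈ S, F (2 * k + 1) ξ = (2 * k + 1).factorial * p.coeff (2 * k + 1) := by
  classical
  have hdeg : p.natDegree ≤ 2 * k + 1 :=
    natDegree_le_iff_coeff_eq_zero.2 fun j hj =>
      coeff_eq_zero_of_degree_lt (hp.degree_lt.trans_le (by rw [hk]; exact_mod_cast hj))
  obtain ⟨ξ, hξS, hξ, -⟩ := hF.exists_eq_factorial_mul_coeff hS hdeg (Z := s.image v)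
    (by rw [coe_image]; exact Set.image_subset_iff.2 hvS) subset_rfl
    (forall_mem_image.2 hp.eval_eq) (forall_mem_image.2 hp.eval_derivative_eq)
    (by rw [card_image_of_injOn hv]; lia)
  exact ⟨ξ, hξS, hξ⟩

lemma degree_add_C_mul_nodal_sq_lt {f f' : ℝ → ℝ} (hp : IsHermiteInterpolant s v f f' p)
    (a : ℝ) : (p + C a * nodal s v ^ 2).degree < (2 * #s + 1 : ℕ) :=
  degree_le_natDegree.trans_lt <| by
    exact_mod_cast Nat.lt_succ_of_le
      (natDegree_add_C_mul_le_of_degree_lt hp.degree_lt (natDegree_nodal_sq s v) a)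

lemma exists_insert [DecidableEq ι] (hp : IsHermiteInterpolant s v (F 0) (F 1) p) {i : ι}
    (his : i ∉ s) (hv : Set.InjOn v ↑(insert i s)) :
    ∃ a b : ℝ, IsHermiteInterpolant (insert i s) v (F 0) (F 1)
      (p + C a * nodal s v ^ 2 + C b * (nodal s v * nodal (insert i s) v)) := by
  have hQi : (nodal s v).eval (v i) ≠ 0 := eval_nodal_not_at_node fun j hj h =>
    his (hv (mem_insert_self i s) (mem_insert_of_mem hj) h ▸ hj)
  set a : ℝ := (F 0 (v i) - p.eval (v i)) / (nodal s v).eval (v i) ^ 2 with ha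
  set b : ℝ := (F 1 (v i) - p.derivative.eval (v i) -
    a * (2 * (nodal s v).eval (v i) * (nodal s v).derivative.eval (v i))) /
      (nodal s v).eval (v i) ^ 2 with hb
  refine ⟨a, b, ?_, ?_, ?_⟩
  · refine degree_le_natDegree.trans_lt ?_
    rw [card_insert_of_notMem his]
    exact_mod_cast (natDegree_add_C_mul_le_of_degree_lt (hp.degree_add_C_mul_nodal_sq_lt a)
      (natDegree_nodal_mul_nodal_insert his v) b).trans_lt (by lia)
  · simp only [forall_mem_insert, nodal_insert_eq_nodal his, eval_add, eval_mul, eval_C, eval_pow,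
      eval_sub, eval_X]
    refine ⟨?_, fun j hj => ?_⟩
    · rw [ha]
      field_simp
      ring
    · rw [eval_nodal_at_node hj, hp.eval_eq j hj]
      ring
  · simp only [forall_mem_insert, nodal_insert_eq_nodal his, derivative_add, derivative_sq,
      derivative_mul, derivative_sub, derivative_X, derivative_C, eval_add, eval_mul, eval_C,
      eval_sub, eval_X, eval_one, eval_zero]
    refine ⟨?_, fun j hj => ?_⟩
    · rw [hb]
      field_simp
      ring
    · rw [eval_nodal_at_node hj, hp.eval_derivative_eq j hj]
      ring

lemma exists_insert_of_nonneg [DecidableEq ι] (hp : IsHermiteInterpolant s v (F 0) (F 1) p)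
    (hS : S.OrdConnected) (hF : IsDerivSeqOn (2 * #s + 1) F S)
    (hpos : ∀ k ≤ 2 * #s + 1, ∀ x ∈ S, 0 ≤ F k x) {i : ι} (his : i ∉ s)
    (hv : Set.InjOn v ↑(insert i s)) (hvS : ∀ j ∈ insert i s, v j ∈ S) :
    ∃ a b : ℝ≥0, IsHermiteInterpolant (insert i s) v (F 0) (F 1)
      (p + a • nodal s v ^ 2 + b • (nodal s v * nodal (insert i s) v)) := by
  obtain ⟨a, b, hq⟩ := hp.exists_insert his hv
  have hne : ∀ j ∈ s, v i ≠ v j := fun j hj h =>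
    his (hv (mem_insert_self i s) (mem_insert_of_mem hj) h ▸ hj)
  have ha : 0 ≤ a := by
    obtain ⟨ξ, hξS, hξ, -⟩ := hp.exists_sub_eval_eq hS (hF.mono (Nat.le_succ _))
      (hv.mono (coe_subset.2 (subset_insert _ _))) (fun j hj => hvS j (mem_insert_of_mem hj))
      (hvS i (mem_insert_self i s)) hne
    have heval := hq.eval_eq i (mem_insert_self i s)
    simp only [eval_add, eval_mul, eval_C, eval_pow, eval_nodal_at_node (mem_insert_self i s),
      mul_zero, add_zero] at heval
    have hQ : (nodal s v).eval (v i) ^ 2 ≠ 0 := pow_ne_zero 2 (eval_nodal_not_at_node hne)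
    rw [← heval, add_sub_cancel_left, mul_left_inj' hQ] at hξ
    rw [hξ]
    exact div_nonneg (hpos _ (Nat.le_succ _) ξ hξS) (Nat.cast_nonneg _)
  have hb : 0 ≤ b := by
    obtain ⟨ξ, hξS, hξ⟩ := hq.exists_coeff_eq hS (card_insert_of_notMem his) hF hv hvS
    rw [coeff_add_C_mul_of_degree_lt (hp.degree_add_C_mul_nodal_sq_lt a)
      (nodal_monic.mul nodal_monic) (natDegree_nodal_mul_nodal_insert his v)] at hξ
    exact nonneg_of_mul_nonneg_right (hξ ▸ hpos _ le_rfl ξ hξS)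
      (Nat.cast_pos.2 (Nat.factorial_pos _))
  refine ⟨⟨a, ha⟩, ⟨b, hb⟩, ?_⟩
  rw [← smul_eq_C_mul, ← smul_eq_C_mul] at hq
  exact hq

end IsHermiteInterpolant

lemma exists_isHermiteInterpolant_mem (hS : S.OrdConnected) {m : ℕ} {τ : ℕ → ℝ}
    (hτ : Set.InjOn τ (range m)) (hτS : ∀ l < m, τ l ∈ S) (hF : IsDerivSeqOn (2 * m) F S)
    (hpos : ∀ k ≤ 2 * m, ∀ x ∈ S, 0 ≤ F k x) {K : Submodule ℝ≥0 ℝ[X]}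
    (hKsq : ∀ l < m, nodal (range l) τ ^ 2 ∈ K)
    (hKmul : ∀ l < m, nodal (range l) τ * nodal (range (l + 1)) τ ∈ K) :
    ∃ p ∈ K, IsHermiteInterpolant (range m) τ (F 0) (F 1) p := by
  induction m with
  | zero => exact ⟨0, K.zero_mem, by simp, by simp, by simp⟩
  | succ m ih =>
    rw [range_add_one] at hτ
    obtain ⟨p, hpK, hp⟩ := ih (hτ.mono (coe_subset.2 (subset_insert _ _)))
      (fun l hl => hτS l (by lia)) (hF.mono (by lia)) (fun k hk => hpos k (by lia))
      (fun l hl => hKsq l (by lia)) (fun l hl => hKmul l (by lia))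
    obtain ⟨a, b, hq⟩ := hp.exists_insert_of_nonneg hS (hF.mono (by rw [card_range]; lia))
      (fun k hk => hpos k (by rw [card_range] at hk; lia)) notMem_range_self hτ
      (by simpa only [← range_add_one, mem_range] using hτS)
    rw [← range_add_one] at hq
    exact ⟨_, K.add_mem (K.add_mem hpK (K.smul_mem a (hKsq m m.lt_succ_self)))
      (K.smul_mem b (hKmul m m.lt_succ_self)), hq⟩

end Hermite

section CosCone

/-- The trigonometric monomial `θ ↦ cos ((2j - n)θ)`; for `j ≤ n` its frequency has the parity of
`n` and is at most `n` in absolute value. -/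
noncomputable def cosMode (n j : ℕ) : ℝ → ℝ := fun θ => cos ((2 * j - n) * θ)

/-- The cone of nonnegative combinations of the functions `θ ↦ cos ((2j - n)θ)`, `j ≤ n`: the
positive definite even trigonometric polynomials of degree at most `n` and parity that of `n`. -/
noncomputable def cosCone (n : ℕ) : Submodule ℝ≥0 (ℝ → ℝ) :=
  Submodule.span ℝ≥0 (cosMode n '' Set.Iic n)

lemma cosMode_mem_cosCone {n j : ℕ} (hj : j ≤ n) : cosMode n j ∈ cosCone n :=
  Submodule.subset_span (Set.mem_image_of_mem _ hj)

lemma smul_mem_cosCone {n : ℕ} {f : ℝ → ℝ} {c : ℝ} (hc : 0 ≤ c) (hf : f ∈ cosCone n) :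
    c • f ∈ cosCone n :=
  (cosCone n).smul_mem ⟨c, hc⟩ hf

lemma cosMode_mul_cosMode (m i : ℕ) {n j : ℕ} (hj : j ≤ n) :
    cosMode m i * cosMode n j =
      (1 / 2 : ℝ) • (cosMode (m + n) (i + j) + cosMode (m + n) (i + (n - j))) := by
  funext θ
  simp only [cosMode, Pi.mul_apply, Pi.smul_apply, Pi.add_apply, smul_eq_mul]
  push_cast [Nat.cast_sub hj]
  rw [show (2 * ((i : ℝ) + j) - (m + n)) * θ = (2 * i - m) * θ + (2 * j - n) * θ by ring,
    show (2 * ((i : ℝ) + (n - j)) - (m + n)) * θ = (2 * i - m) * θ - (2 * j - n) * θ by ring,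
    cos_add, cos_sub]
  ring

lemma mul_mem_cosCone {m n : ℕ} {f g : ℝ → ℝ} (hf : f ∈ cosCone m) (hg : g ∈ cosCone n) :
    f * g ∈ cosCone (m + n) := by
  have hle : cosCone m * cosCone n ≤ cosCone (m + n) := by
    rw [cosCone, cosCone, Submodule.span_mul_span, Submodule.span_le]
    rintro _ ⟨_, ⟨i, hi, rfl⟩, _, ⟨j, hj, rfl⟩, rfl⟩
    rw [Set.mem_Iic] at hi hj
    change cosMode m i * cosMode n j ∈ cosCone (m + n)
    rw [cosMode_mul_cosMode m i hj]
    exact smul_mem_cosCone (by norm_num) (add_mem (cosMode_mem_cosCone (by lia))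
      (cosMode_mem_cosCone (by lia)))
  exact hle (Submodule.mul_mem_mul hf hg)

lemma cosCone_le_cosCone_add_two_mul (n k : ℕ) : cosCone n ≤ cosCone (n + 2 * k) := by
  rw [cosCone, Submodule.span_le]
  rintro _ ⟨j, hj, rfl⟩
  have heq : cosMode n j = cosMode (n + 2 * k) (j + k) := by
    funext θ
    simp only [cosMode]
    push_cast
    ring_nf
  rw [heq]
  rw [Set.mem_Iic] at hj
  exact cosMode_mem_cosCone (by lia)

end CosCone

section QBinomial

open Complex (I)

variable {α : ℝ}

/-- The Gaussian binomial coefficient at `q = exp (2iα)` in its symmetric normalization, a product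
of quotients of sines. It is meaningful where no denominator vanishes. -/
noncomputable def sinBinom (α : ℝ) (n k : ℕ) : ℝ :=
  ∏ i ∈ range k, sin ((n - i) * α) / sin ((i + 1) * α)

/-- The product of `n` factors `2 cos` at an arithmetic progression of step `α` centred at `θ`. -/
noncomputable def cosProd (α : ℝ) (n : ℕ) (θ : ℝ) : ℝ :=
  ∏ j ∈ range n, 2 * cos (θ + (2 * j + 1 - n) * α / 2)

lemma sinBinom_zero_right (n : ℕ) : sinBinom α n 0 = 1 := prod_range_zero _

lemma sinBinom_succ_right (n k : ℕ) :
    sinBinom α n (k + 1) = sinBinom α n k * (sin ((n - k) * α) / sin ((k + 1) * α)) :=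
  prod_range_succ _ _

lemma sinBinom_succ_succ (n k : ℕ) :
    sinBinom α (n + 1) (k + 1) = sinBinom α n k * (sin ((n + 1) * α) / sin ((k + 1) * α)) := by
  simp only [sinBinom, prod_div_distrib]
  rw [prod_range_succ' (fun i : ℕ => sin (((n + 1 : ℕ) - i) * α)),
    prod_range_succ (fun i : ℕ => sin ((i + 1) * α))]
  push_cast
  simp only [add_sub_add_right_eq_sub, sub_zero]
  rw [mul_div_mul_comm]

lemma sinBinom_self_succ (n : ℕ) : sinBinom α n (n + 1) = 0 := by
  rw [sinBinom_succ_right, sub_self, zero_mul, sin_zero, zero_div, mul_zero]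

lemma ofReal_sin_add_eq (a b : ℝ) :
    (sin (a + b) : ℂ) = Complex.exp (a * I) * sin b + Complex.exp (-b * I) * sin a := by
  push_cast
  rw [Complex.exp_mul_I, Complex.exp_mul_I, Complex.sin_add, Complex.cos_neg, Complex.sin_neg]
  ring

lemma sinBinom_pascal (n : ℕ) {k : ℕ} (hk : sin ((k + 1) * α) ≠ 0) :
    (sinBinom α (n + 1) (k + 1) : ℂ) = Complex.exp ((n - k) * α * I) * sinBinom α n k +
      Complex.exp (-(k + 1) * α * I) * sinBinom α n (k + 1) := by
  have hsin := ofReal_sin_add_eq ((n - k) * α) ((k + 1) * α)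
  rw [show (n - k) * α + (k + 1) * α = (n + 1) * α by ring] at hsin
  simp only [Complex.ofReal_mul, Complex.ofReal_sub, Complex.ofReal_add, Complex.ofReal_natCast,
    Complex.ofReal_one, ← neg_mul] at hsin
  have hk' : (sin ((k + 1) * α) : ℂ) ≠ 0 := Complex.ofReal_ne_zero.2 hk
  rw [sinBinom_succ_succ, sinBinom_succ_right]
  simp only [Complex.ofReal_mul, Complex.ofReal_div]
  rw [hsin]
  field_simp

lemma cosProd_succ (α : ℝ) (n : ℕ) (θ : ℝ) :
    cosProd α (n + 1) θ = cosProd α n (θ - α / 2) * (2 * cos (θ + n * α / 2)) := by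
  rw [cosProd, cosProd, prod_range_succ]
  push_cast
  congr 1
  · refine prod_congr rfl fun j _ => ?_
    ring_nf
  · ring_nf

lemma cosProd_add_two (α : ℝ) (n : ℕ) (θ : ℝ) :
    cosProd α (n + 2) θ = cosProd α n θ * (2 * cos (θ - (n + 1) * α / 2)) *
      (2 * cos (θ + (n + 1) * α / 2)) := by
  rw [cosProd, cosProd, prod_range_succ, prod_range_succ']
  push_cast
  congr 2
  · refine prod_congr rfl fun j _ => ?_
    ring_nf
  · ring_nf
  · ring_nf

lemma exp_mul_two_cos (n k : ℕ) (θ : ℝ) :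
    Complex.exp ((2 * k - n) * (θ - α / 2 : ℝ) * I) * (2 * cos (θ + n * α / 2) : ℝ) =
      Complex.exp ((n - k) * α * I) * Complex.exp ((2 * k + 1 - n) * θ * I) +
        Complex.exp (-k * α * I) * Complex.exp ((2 * k - 1 - n) * θ * I) := by
  push_cast
  rw [Complex.two_cos, mul_add]
  simp only [← Complex.exp_add]
  ring_nf

lemma ofReal_cosProd_eq_sum {n : ℕ} (hα : ∀ k < n, sin ((k + 1) * α) ≠ 0) (θ : ℝ) :
    (cosProd α n θ : ℂ) =
      ∑ k ∈ range (n + 1), sinBinom α n k * Complex.exp ((2 * k - n) * θ * I) := by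
  induction n generalizing θ with
  | zero => simp [cosProd, sinBinom_zero_right]
  | succ n ih =>
    let U : ℕ → ℂ := fun k =>
      sinBinom α n k * (Complex.exp ((n - k) * α * I) * Complex.exp ((2 * k + 1 - n) * θ * I))
    let L : ℕ → ℂ := fun k =>
      sinBinom α n k * (Complex.exp (-k * α * I) * Complex.exp ((2 * k - 1 - n) * θ * I))
    have hcoeff : ∀ k ∈ range (n + 1), (sinBinom α (n + 1) (k + 1) : ℂ) *
        Complex.exp ((2 * (k + 1 : ℕ) - (n + 1 : ℕ)) * θ * I) = U k + L (k + 1) := by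
      intro k hk
      rw [sinBinom_pascal n (hα k (mem_range.1 hk))]
      simp only [U, L]
      push_cast
      ring_nf
    have hcoeff_zero : (sinBinom α (n + 1) 0 : ℂ) *
        Complex.exp ((2 * (0 : ℕ) - (n + 1 : ℕ)) * θ * I) = L 0 := by
      simp only [L, sinBinom_zero_right]
      push_cast
      rw [neg_zero, zero_mul, zero_mul, Complex.exp_zero]
      ring_nf
    have hL : L (n + 1) = 0 := by
      simp only [L, sinBinom_self_succ, Complex.ofReal_zero, zero_mul]
    calc (cosProd α (n + 1) θ : ℂ)
        = ∑ k ∈ range (n + 1), (U k + L k) := by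
          rw [cosProd_succ, Complex.ofReal_mul, ih (fun k hk => hα k (by lia)), sum_mul]
          exact sum_congr rfl fun k _ => by
            rw [mul_assoc, exp_mul_two_cos, mul_add]
      _ = ∑ k ∈ range (n + 1), (U k + L (k + 1)) + L 0 := by
          rw [sum_add_distrib, sum_add_distrib, add_assoc, ← sum_range_succ' L,
            sum_range_succ L (n + 1), hL, add_zero]
      _ = _ := by rw [sum_range_succ' _ (n + 1), sum_congr rfl hcoeff, hcoeff_zero]

lemma cosProd_eq_sum {n : ℕ} (hα : ∀ k < n, sin ((k + 1) * α) ≠ 0) :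
    cosProd α n = ∑ k ∈ range (n + 1), sinBinom α n k • cosMode n k := by
  funext θ
  have h := congrArg Complex.re (ofReal_cosProd_eq_sum hα θ)
  rw [Complex.ofReal_re, Complex.re_sum] at h
  rw [h, Finset.sum_apply]
  refine sum_congr rfl fun k _ => ?_
  rw [Complex.re_ofReal_mul, Pi.smul_apply, smul_eq_mul, cosMode]
  congr 1
  exact_mod_cast Complex.exp_ofReal_mul_I_re _

lemma sin_mul_pi_div_pos {N : ℕ} {x : ℝ} (hx : 0 < x) (hxN : x < N) : 0 < sin (x * (π / N)) := by
  have hN : (0 : ℝ) < N := hx.trans hxN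
  refine sin_pos_of_pos_of_lt_pi (by positivity) ?_
  rw [← mul_div_assoc, div_lt_iff₀ hN, mul_comm]
  exact mul_lt_mul_of_pos_left hxN pi_pos

lemma sinBinom_pi_div_nonneg {N n k : ℕ} (hkn : k ≤ n) (hnN : n < N) :
    0 ≤ sinBinom (π / N) n k := by
  refine prod_nonneg fun i hi => ?_
  have hin : (i : ℝ) + 1 ≤ n := by exact_mod_cast (mem_range.1 hi).trans_le hkn
  have hnN' : (n : ℝ) < N := by exact_mod_cast hnN
  exact div_nonneg (sin_mul_pi_div_pos (by linarith) (by linarith [i.cast_nonneg (α := ℝ)])).le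
    (sin_mul_pi_div_pos i.cast_add_one_pos (by linarith)).le

lemma cosProd_pi_div_mem_cosCone {N n : ℕ} (hnN : n < N) : cosProd (π / N) n ∈ cosCone n := by
  have hsin : ∀ k < n, sin ((k + 1) * (π / N)) ≠ 0 := fun k hk =>
    (sin_mul_pi_div_pos k.cast_add_one_pos (by exact_mod_cast (show k + 1 < N by lia))).ne'
  rw [cosProd_eq_sum hsin]
  refine sum_mem fun k hk => ?_
  have hkn : k ≤ n := Nat.lt_succ_iff.1 (mem_range.1 hk)
  exact smul_mem_cosCone (sinBinom_pi_div_nonneg hkn hnN) (cosMode_mem_cosCone hkn)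

end QBinomial

section Nodes

/-- The squared inner products `cos² (kπ/N)`, `1 ≤ k ≤ ⌊N/2⌋`, of the half-circle configuration,
in increasing order: `node N l` is the one with `k = ⌊N/2⌋ - l`, for `l < N/2`. -/
noncomputable def node (N l : ℕ) : ℝ := cos (((N / 2 : ℕ) - l) * (π / N)) ^ 2

lemma strictMonoOn_node (N : ℕ) : StrictMonoOn (node N) (Set.Iio (N / 2)) := by
  intro l _ l' (hl' : l' < N / 2) hll'
  have hN : (0 : ℝ) < N := by exact_mod_cast (show 0 < N by lia)
  have hα : 0 < π / N := div_pos pi_pos hN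
  have hle : ((N / 2 : ℕ) - l : ℝ) * (π / N) ≤ π / 2 := by
    have h : 2 * ((N / 2 : ℕ) : ℝ) ≤ N := by exact_mod_cast Nat.mul_div_le N 2
    calc ((N / 2 : ℕ) - l : ℝ) * (π / N) ≤ (N / 2 : ℝ) * (π / N) := by
          gcongr
          linarith [l.cast_nonneg (α := ℝ)]
      _ = π / 2 := by field_simp
  have hlt : (l : ℝ) < l' := by exact_mod_cast hll'
  have hpos : 0 < ((N / 2 : ℕ) - l' : ℝ) := sub_pos.2 (by exact_mod_cast hl')
  have hangle : ((N / 2 : ℕ) - l' : ℝ) * (π / N) < ((N / 2 : ℕ) - l) * (π / N) := by gcongr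
  have hcos : 0 ≤ cos (((N / 2 : ℕ) - l) * (π / N)) :=
    cos_nonneg_of_neg_pi_div_two_le_of_le (by nlinarith [pi_pos]) hle
  exact pow_lt_pow_left₀ (cos_lt_cos_of_nonneg_of_le_pi_div_two (by positivity) hle hangle) hcos
    two_ne_zero

lemma injOn_node (N : ℕ) : Set.InjOn (node N) (range (N / 2)) := by
  rw [coe_range]
  exact (strictMonoOn_node N).injOn

lemma exists_node_eq {N k : ℕ} (hk : 0 < k) (hkN : k < N) :
    ∃ l < N / 2, cos (k * (π / N)) ^ 2 = node N l := by
  have hN : (N : ℝ) ≠ 0 := Nat.cast_ne_zero.2 (by lia)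
  obtain hle | hgt := le_or_gt k (N / 2)
  · refine ⟨N / 2 - k, by lia, ?_⟩
    rw [node, Nat.cast_sub hle, sub_sub_cancel]
  · refine ⟨N / 2 - (N - k), by lia, ?_⟩
    rw [node, Nat.cast_sub (by lia : N - k ≤ N / 2), sub_sub_cancel, Nat.cast_sub hkN.le, sub_mul,
      mul_div_cancel₀ π hN, cos_pi_sub, neg_sq]

lemma node_mem_Ico {N l : ℕ} (hl : l < N / 2) : node N l ∈ Set.Ico (0 : ℝ) 1 := by
  refine ⟨sq_nonneg _, ?_⟩
  have hsin : 0 < sin (((N / 2 : ℕ) - l) * (π / N)) :=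
    sin_mul_pi_div_pos (sub_pos.2 (by exact_mod_cast hl))
      ((sub_le_self _ l.cast_nonneg).trans_lt (by exact_mod_cast (show N / 2 < N by lia)))
  rw [node, cos_sq']
  exact sub_lt_self 1 (pow_pos hsin 2)

lemma cos_sq_sub_cos_sq (a θ : ℝ) :
    cos θ ^ 2 - cos a ^ 2 = cos (θ - (π / 2 - a)) * cos (θ + (π / 2 - a)) := by
  rw [cos_sub, cos_add, cos_pi_div_two_sub, sin_pi_div_two_sub]
  linear_combination cos a ^ 2 * sin_sq θ - cos θ ^ 2 * sin_sq a

lemma cos_sq_sub_node {N l k : ℕ} (hN : N ≠ 0) (hk : N + 2 * l = k + 2 * (N / 2)) (θ : ℝ) :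
    cos θ ^ 2 - node N l = cos (θ - k * (π / N) / 2) * cos (θ + k * (π / N) / 2) := by
  have hN' : (N : ℝ) ≠ 0 := Nat.cast_ne_zero.2 hN
  have hk' : (N : ℝ) + 2 * l = k + 2 * (N / 2 : ℕ) := by exact_mod_cast hk
  have hangle : π / 2 - ((N / 2 : ℕ) - l) * (π / N) = k * (π / N) / 2 := by
    linear_combination (π / N / 2) * hk' - (1 / 2) * mul_div_cancel₀ π hN'
  rw [node, cos_sq_sub_cos_sq, hangle]

lemma cosProd_pi_div_add_two {N l n : ℕ} (hN : N ≠ 0) (hn : N + 2 * l = n + 1 + 2 * (N / 2))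
    (θ : ℝ) :
    cosProd (π / N) (n + 2) θ = cosProd (π / N) n θ * (4 * (cos θ ^ 2 - node N l)) := by
  rw [cosProd_add_two, cos_sq_sub_node hN hn]
  push_cast
  ring

lemma cosProd_pi_div_two_mul {N : ℕ} (hN : Odd N) (l : ℕ) (θ : ℝ) :
    cosProd (π / N) (2 * l) θ = ∏ i ∈ range l, (4 * (cos θ ^ 2 - node N i)) := by
  induction l with
  | zero => simp [cosProd]
  | succ l ih =>
    rw [mul_add_one, cosProd_pi_div_add_two (l := l) hN.pos.ne' (by grind), ih, prod_range_succ]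

lemma cosProd_pi_div_two_mul_add_one {N : ℕ} (hN : Even N) (hN0 : N ≠ 0) (l : ℕ) (θ : ℝ) :
    2 * cos θ * cosProd (π / N) (2 * l + 1) θ =
      ∏ i ∈ range (l + 1), (4 * (cos θ ^ 2 - node N i)) := by
  induction l with
  | zero =>
    rw [prod_range_one, cos_sq_sub_node (k := 0) hN0 (by grind)]
    simp only [cosProd]
    norm_num
    ring
  | succ l ih =>
    rw [mul_add_one, add_right_comm,
      cosProd_pi_div_add_two (l := l + 1) hN0 (by grind), ← mul_assoc, ih, ← prod_range_succ]

lemma prod_four_mul_cos_sq_sub_node_mem_cosCone {N l : ℕ} (hl : l ≤ N / 2) :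
    (fun θ => ∏ i ∈ range l, (4 * (cos θ ^ 2 - node N i))) ∈ cosCone (2 * l) := by
  obtain rfl | hl0 := l.eq_zero_or_pos
  · exact Submodule.subset_span ⟨0, Set.self_mem_Iic, by simp [funext_iff, cosMode]⟩
  obtain hN | hN := N.even_or_odd
  · obtain ⟨l, rfl⟩ := Nat.exists_eq_add_one.2 hl0
    have hmul : (2 : ℝ) • cosMode 1 1 * cosProd (π / N) (2 * l + 1) ∈ cosCone (1 + (2 * l + 1)) :=
      mul_mem_cosCone (smul_mem_cosCone zero_le_two (cosMode_mem_cosCone le_rfl))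
        (cosProd_pi_div_mem_cosCone (by lia))
    rw [show 2 * (l + 1) = 1 + (2 * l + 1) by ring]
    convert hmul using 1
    funext θ
    rw [← cosProd_pi_div_two_mul_add_one hN (by lia), Pi.mul_apply, Pi.smul_apply, smul_eq_mul,
      cosMode, Nat.cast_one, show ((2 : ℝ) * 1 - 1) * θ = θ by ring]
  · rw [← funext fun θ => cosProd_pi_div_two_mul hN l θ]
    exact cosProd_pi_div_mem_cosCone (by grind)

lemma prod_cos_sq_sub_node_mem_cosCone {N l : ℕ} (hl : l ≤ N / 2) :
    (fun θ => ∏ i ∈ range l, (cos θ ^ 2 - node N i)) ∈ cosCone (2 * l) := by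
  convert smul_mem_cosCone (inv_nonneg.2 (by positivity : (0 : ℝ) ≤ 4 ^ l))
    (prod_four_mul_cos_sq_sub_node_mem_cosCone hl) using 1
  funext θ
  rw [Pi.smul_apply, smul_eq_mul, prod_mul_distrib, prod_const, card_range,
    inv_mul_cancel_left₀ (by positivity)]

end Nodes

section PowerSums

open Complex (I)

/-- The polar angles of the points of `halfCircle N`. -/
noncomputable def halfCircleAngle (N : ℕ) (k : Fin N) : ℝ := (k : ℕ) * π / N

lemma sum_sum_cos_sub_eq_norm_sq {ι : Type*} [Fintype ι] (x : ι → ℝ) :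
    ∑ i, ∑ j, cos (x i - x j) = ‖∑ i, Complex.exp (x i * I)‖ ^ 2 := by
  rw [Complex.sq_norm, Complex.normSq_apply, Complex.re_sum, Complex.im_sum]
  simp only [Complex.exp_ofReal_mul_I_re, Complex.exp_ofReal_mul_I_im, sum_mul_sum,
    ← sum_add_distrib, cos_sub]

lemma sum_exp_two_mul_halfCircleAngle_eq_zero {N : ℕ} {d : ℤ} (hd : ¬(N : ℤ) ∣ d) :
    ∑ k : Fin N, Complex.exp ((2 * d * halfCircleAngle N k : ℝ) * I) = 0 := by
  obtain rfl | hN := eq_or_ne N 0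
  · simp
  have hroot : IsPrimitiveRoot (Complex.exp (2 * π * I / N)) N := Complex.isPrimitiveRoot_exp N hN
  set ζ : ℂ := Complex.exp (2 * π * I / N) ^ d
  have hζ : ζ ≠ 1 := mt (hroot.zpow_eq_one_iff_dvd d).1 hd
  have hζN : ζ ^ N = 1 := by
    rw [← zpow_natCast, zpow_comm, zpow_natCast, hroot.pow_eq_one, one_zpow]
  have hterm (k : Fin N) : Complex.exp ((2 * d * halfCircleAngle N k : ℝ) * I) = ζ ^ (k : ℕ) := by
    simp only [ζ, halfCircleAngle, ← Complex.exp_int_mul, ← Complex.exp_nat_mul]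
    push_cast
    ring_nf
  rw [sum_congr rfl fun k _ => hterm k, Fin.sum_univ_eq_sum_range (ζ ^ ·), geom_sum_eq hζ, hζN,
    sub_self, zero_div]

lemma sum_sum_cosMode_halfCircleAngle_le {N j : ℕ} (hj : j ≤ 2 * (N - 1))
    (x : Fin N → ℝ) :
    ∑ k, ∑ l, cosMode (2 * (N - 1)) j (halfCircleAngle N k - halfCircleAngle N l) ≤
      ∑ k, ∑ l, cosMode (2 * (N - 1)) j (x k - x l) := by
  obtain rfl | hne := eq_or_ne j (N - 1)
  · simp [cosMode]
  set d : ℤ := j - (N - 1 : ℕ) with hd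
  have hmode (y : Fin N → ℝ) : ∑ k, ∑ l, cosMode (2 * (N - 1)) j (y k - y l) =
      ‖∑ k, Complex.exp ((2 * d * y k : ℝ) * I)‖ ^ 2 := by
    rw [← sum_sum_cos_sub_eq_norm_sq]
    refine sum_congr rfl fun k _ => sum_congr rfl fun l _ => ?_
    rw [cosMode, hd]
    push_cast
    ring_nf
  have hdvd : ¬(N : ℤ) ∣ d := fun h => by
    have := Int.eq_zero_of_abs_lt_dvd h (abs_lt.2 ⟨by lia, by lia⟩)
    lia
  rw [hmode, hmode, sum_exp_two_mul_halfCircleAngle_eq_zero hdvd, norm_zero, zero_pow two_ne_zero]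
  positivity

lemma sum_sum_halfCircleAngle_le_of_mem_cosCone {N : ℕ} {f : ℝ → ℝ}
    (hf : f ∈ cosCone (2 * (N - 1))) (x : Fin N → ℝ) :
    ∑ k, ∑ l, f (halfCircleAngle N k - halfCircleAngle N l) ≤ ∑ k, ∑ l, f (x k - x l) := by
  induction hf using Submodule.span_induction with
  | mem f hf =>
    obtain ⟨j, hj, rfl⟩ := hf
    exact sum_sum_cosMode_halfCircleAngle_le hj x
  | zero => simp
  | add f g _ _ hf hg =>
    simp only [Pi.add_apply, sum_add_distrib]
    exact add_le_add hf hg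
  | smul c f _ hf =>
    simp only [Pi.smul_apply, ← smul_sum]
    exact smul_le_smul_of_nonneg_left hf c.2

end PowerSums

section LinearProgramming

variable {N : ℕ} {G : ℕ → ℝ → ℝ}

/-- The polynomials `p` for which `θ ↦ p (cos² θ)` lies in `cosCone n`. -/
noncomputable def cosSqCone (n : ℕ) : Submodule ℝ≥0 ℝ[X] :=
  (cosCone n).comap
    ((aeval (fun θ => cos θ ^ 2 : ℝ → ℝ)).toLinearMap.restrictScalars ℝ≥0)

lemma mem_cosSqCone {n : ℕ} {p : ℝ[X]} :
    p ∈ cosSqCone n ↔ (fun θ => p.eval (cos θ ^ 2)) ∈ cosCone n := by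
  have heq : aeval (fun θ => cos θ ^ 2 : ℝ → ℝ) p = fun θ => p.eval (cos θ ^ 2) := by
    funext θ
    rw [aeval_fn_apply, coe_aeval_eq_eval]
  rw [← heq]
  rfl

lemma nodal_node_mul_mem_cosSqCone {l l' : ℕ} (hl : l ≤ N / 2) (hl' : l' ≤ N / 2)
    (hN : l + l' < N) :
    nodal (range l) (node N) * nodal (range l') (node N) ∈ cosSqCone (2 * (N - 1)) := by
  have hmem := cosCone_le_cosCone_add_two_mul _ (N - 1 - (l + l'))
    (mul_mem_cosCone (prod_cos_sq_sub_node_mem_cosCone hl) (prod_cos_sq_sub_node_mem_cosCone hl'))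
  rw [show 2 * l + 2 * l' + 2 * (N - 1 - (l + l')) = 2 * (N - 1) by lia] at hmem
  simpa only [mem_cosSqCone, eval_mul, eval_nodal, Pi.mul_def] using hmem

lemma exists_isHermiteInterpolant_mem_cosSqCone
    (hG : IsDerivSeqOn (2 * (N / 2)) G (Set.Ico 0 1))
    (hmon : ∀ k ≤ 2 * (N / 2), ∀ t ∈ Set.Ico (0 : ℝ) 1, 0 ≤ G k t) :
    ∃ p ∈ cosSqCone (2 * (N - 1)),
      IsHermiteInterpolant (range (N / 2)) (node N) (G 0) (G 1) p := by
  refine exists_isHermiteInterpolant_mem Set.ordConnected_Ico (injOn_node N) (fun _ => node_mem_Ico)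
    hG hmon (fun l hl => ?_) fun l hl => nodal_node_mul_mem_cosSqCone (by lia) (by lia) (by lia)
  rw [sq]
  exact nodal_node_mul_mem_cosSqCone hl.le hl.le (by lia)

/-- The `g`-energy of the unit vectors in the plane with polar angles `x i`. -/
noncomputable def angleEnergy {ι : Type*} [Fintype ι] (g : ℝ → ℝ) (x : ι → ℝ) : ℝ :=
  ∑ p ∈ univ.offDiag, g (cos (x p.1 - x p.2) ^ 2)

lemma sum_sum_eq_sum_diag_add_sum_offDiag {ι : Type*} [Fintype ι] (f : ι → ι → ℝ) :
    ∑ i, ∑ j, f i j = ∑ i, f i i + ∑ p ∈ univ.offDiag, f p.1 p.2 := by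
  classical
  rw [← sum_product', ← diag_union_offDiag, sum_union (disjoint_diag_offDiag _), sum_diag]

lemma angleEnergy_halfCircleAngle_le_of_mem_cosCone {h : ℝ → ℝ}
    (hh : (fun θ => h (cos θ ^ 2)) ∈ cosCone (2 * (N - 1))) (x : Fin N → ℝ) :
    angleEnergy h (halfCircleAngle N) ≤ angleEnergy h x := by
  have hle := sum_sum_halfCircleAngle_le_of_mem_cosCone hh x
  simpa only [sum_sum_eq_sum_diag_add_sum_offDiag, sub_self, add_le_add_iff_left, angleEnergy]
    using hle

lemma exists_cos_sq_halfCircleAngle_sub_eq_node {i j : Fin N} (hij : i ≠ j) :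
    ∃ l < N / 2, cos (halfCircleAngle N i - halfCircleAngle N j) ^ 2 = node N l := by
  wlog hji : j < i generalizing i j
  · rw [← cos_neg, neg_sub]
    exact this hij.symm (lt_of_le_of_ne (not_lt.1 hji) hij)
  rw [Fin.lt_def] at hji
  convert exists_node_eq (Nat.sub_pos_of_lt hji) ((Nat.sub_le _ _).trans_lt i.isLt) using 6
  rw [halfCircleAngle, halfCircleAngle, Nat.cast_sub hji.le]
  ring

variable {p : ℝ[X]}

lemma IsHermiteInterpolant.angleEnergy_halfCircleAngle_eq
    (hp : IsHermiteInterpolant (range (N / 2)) (node N) (G 0) (G 1) p) :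
    angleEnergy (fun t => p.eval t) (halfCircleAngle N) =
      angleEnergy (G 0) (halfCircleAngle N) := by
  refine sum_congr rfl fun q hq => ?_
  obtain ⟨l, hl, hnode⟩ := exists_cos_sq_halfCircleAngle_sub_eq_node (mem_offDiag.1 hq).2.2
  simp only [hnode, hp.eval_eq l (mem_range.2 hl)]

lemma IsHermiteInterpolant.eval_le_of_mem_Ico
    (hp : IsHermiteInterpolant (range (N / 2)) (node N) (G 0) (G 1) p)
    (hG : IsDerivSeqOn (2 * (N / 2)) G (Set.Ico 0 1))
    (hpos : ∀ t ∈ Set.Ico (0 : ℝ) 1, 0 ≤ G (2 * (N / 2)) t) {t : ℝ}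
    (ht : t ∈ Set.Ico (0 : ℝ) 1) : p.eval t ≤ G 0 t :=
  hp.eval_le Set.ordConnected_Ico (by rwa [card_range]) (injOn_node N)
    (fun _ hl => node_mem_Ico (mem_range.1 hl)) (by rwa [card_range]) ht

lemma IsHermiteInterpolant.exists_eq_node
    (hp : IsHermiteInterpolant (range (N / 2)) (node N) (G 0) (G 1) p) (hN : 2 ≤ N)
    (hG : IsDerivSeqOn (2 * (N / 2)) G (Set.Ico 0 1))
    (hpos : ∀ t ∈ Set.Ioo (0 : ℝ) 1, 0 < G (2 * (N / 2)) t) {t : ℝ} (ht : t ∈ Set.Ico (0 : ℝ) 1)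
    (heq : p.eval t = G 0 t) : ∃ l < N / 2, t = node N l := by
  by_contra! hne
  exact (hp.eval_lt Set.ordConnected_Ico (by rwa [card_range]) (injOn_node N)
    (fun _ hl => node_mem_Ico (mem_range.1 hl)) (nonempty_range_iff.2 (by lia))
    (by rwa [card_range, interior_Ico]) ht fun l hl => hne l (mem_range.1 hl)).ne heq

theorem angleEnergy_halfCircleAngle_le (hG : IsDerivSeqOn (2 * (N / 2)) G (Set.Ico 0 1))
    (hmon : ∀ k ≤ 2 * (N / 2), ∀ t ∈ Set.Ico (0 : ℝ) 1, 0 ≤ G k t) {x : Fin N → ℝ}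
    (hx : ∀ i j, i ≠ j → cos (x i - x j) ^ 2 < 1) :
    angleEnergy (G 0) (halfCircleAngle N) ≤ angleEnergy (G 0) x := by
  obtain ⟨p, hpK, hp⟩ := exists_isHermiteInterpolant_mem_cosSqCone hG hmon
  calc angleEnergy (G 0) (halfCircleAngle N)
      = angleEnergy (fun t => p.eval t) (halfCircleAngle N) :=
        hp.angleEnergy_halfCircleAngle_eq.symm
    _ ≤ angleEnergy (fun t => p.eval t) x :=
        angleEnergy_halfCircleAngle_le_of_mem_cosCone (mem_cosSqCone.1 hpK) x
    _ ≤ angleEnergy (G 0) x := sum_le_sum fun q hq => hp.eval_le_of_mem_Ico hG (hmon _ le_rfl)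
        ⟨sq_nonneg _, hx _ _ (mem_offDiag.1 hq).2.2⟩

theorem exists_cos_sq_sub_eq_node_of_angleEnergy_eq
    (hG : IsDerivSeqOn (2 * (N / 2)) G (Set.Ico 0 1))
    (hmon : ∀ k ≤ 2 * (N / 2), ∀ t ∈ Set.Ico (0 : ℝ) 1, 0 ≤ G k t)
    (hpos : ∀ t ∈ Set.Ioo (0 : ℝ) 1, 0 < G (2 * (N / 2)) t) {x : Fin N → ℝ}
    (hx : ∀ i j, i ≠ j → cos (x i - x j) ^ 2 < 1)
    (heq : angleEnergy (G 0) x = angleEnergy (G 0) (halfCircleAngle N)) {i j : Fin N}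
    (hij : i ≠ j) : ∃ l < N / 2, cos (x i - x j) ^ 2 = node N l := by
  have hN : 2 ≤ N := by
    have := Fin.val_ne_of_ne hij
    lia
  obtain ⟨p, hpK, hp⟩ := exists_isHermiteInterpolant_mem_cosSqCone hG hmon
  have hle : ∀ q ∈ (univ : Finset (Fin N)).offDiag,
      p.eval (cos (x q.1 - x q.2) ^ 2) ≤ G 0 (cos (x q.1 - x q.2) ^ 2) := fun q hq =>
    hp.eval_le_of_mem_Ico hG (hmon _ le_rfl) ⟨sq_nonneg _, hx _ _ (mem_offDiag.1 hq).2.2⟩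
  have hsum : angleEnergy (fun t => p.eval t) x = angleEnergy (G 0) x :=
    (sum_le_sum hle).antisymm <| by
      change angleEnergy (G 0) x ≤ angleEnergy (fun t => p.eval t) x
      rw [heq, ← hp.angleEnergy_halfCircleAngle_eq]
      exact angleEnergy_halfCircleAngle_le_of_mem_cosCone (mem_cosSqCone.1 hpK) x
  exact hp.exists_eq_node hN hG hpos ⟨sq_nonneg _, hx i j hij⟩
    ((sum_eq_sum_iff_of_le hle).1 hsum (i, j) (mem_offDiag.2 ⟨mem_univ i, mem_univ j, hij⟩))

end LinearProgramming

section PlaneConfigurations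

/-- The unit vector of the plane with polar angle `θ`. -/
noncomputable def unitVec (θ : ℝ) : EuclideanSpace ℝ (Fin 2) := !₂[cos θ, sin θ]

/-- The rotation of the plane by the angle `φ`, transported from `ℂ`. -/
noncomputable def planeRotation (φ : ℝ) :
    EuclideanSpace ℝ (Fin 2) ≃ₗᵢ[ℝ] EuclideanSpace ℝ (Fin 2) :=
  Complex.orthonormalBasisOneI.repr.symm.trans
    ((rotation (Circle.exp φ)).trans Complex.orthonormalBasisOneI.repr)

lemma unitVec_eq_repr (θ : ℝ) :
    unitVec θ = Complex.orthonormalBasisOneI.repr (Complex.exp (θ * Complex.I)) := by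
  ext i
  fin_cases i <;> simp [unitVec, Complex.exp_ofReal_mul_I_re, Complex.exp_ofReal_mul_I_im]

lemma planeRotation_unitVec (φ θ : ℝ) : planeRotation φ (unitVec θ) = unitVec (φ + θ) := by
  simp [planeRotation, unitVec_eq_repr, rotation_apply, ← Complex.exp_add, add_mul]

lemma unitVec_add_int_mul_pi (θ : ℝ) (q : ℤ) :
    unitVec (θ + q * π) = (-1 : ℝ) ^ q • unitVec θ := by
  ext i
  fin_cases i <;> simp [unitVec, cos_add_int_mul_pi, sin_add_int_mul_pi]

lemma exists_unitVec_eq {v : EuclideanSpace ℝ (Fin 2)} (hv : ‖v‖ = 1) : ∃ θ, unitVec θ = v := by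
  set z : ℂ := Complex.orthonormalBasisOneI.repr.symm v with hz
  have hnorm : ‖z‖ = 1 := by rw [hz, LinearIsometryEquiv.norm_map, hv]
  refine ⟨z.arg, ?_⟩
  have hexp := Complex.norm_mul_exp_arg_mul_I z
  rw [hnorm, Complex.ofReal_one, one_mul] at hexp
  rw [unitVec_eq_repr, hexp, hz, LinearIsometryEquiv.apply_symm_apply]

lemma inner_unitVec (a b : ℝ) : ⟪unitVec a, unitVec b⟫ = cos (a - b) := by
  simp only [unitVec, PiLp.inner_apply, RCLike.inner_apply, ringHom_apply, Fin.sum_univ_two,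
    Matrix.cons_val_zero, Matrix.cons_val_one, Matrix.cons_val_fin_one, cos_sub]
  ring

lemma gEnergy_unitVec {N : ℕ} (g : ℝ → ℝ) (x : Fin N → ℝ) :
    gEnergy N g (fun i => unitVec (x i)) = angleEnergy g x := by
  simp only [gEnergy, sum_sum_eq_sum_diag_add_sum_offDiag, inner_unitVec, sq_abs, ne_eq,
    not_true_eq_false, if_false, sum_const_zero, zero_add]
  exact sum_congr rfl fun p hp => if_pos (mem_offDiag.1 hp).2.2

lemma halfCircle_eq_unitVec (N : ℕ) :
    halfCircle N = fun k => unitVec (halfCircleAngle N k) := rfl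

lemma exists_eq_int_mul_pi_div_of_cos_sq_eq_node {N l : ℕ} (hN : N ≠ 0) {y : ℝ}
    (hy : cos y ^ 2 = node N l) : ∃ n : ℤ, y = n * (π / N) := by
  have hN' : (N : ℝ) ≠ 0 := Nat.cast_ne_zero.2 hN
  have hcos : cos (2 * (((N / 2 : ℕ) - l) * (π / N))) = cos (2 * y) := by
    rw [cos_two_mul, cos_two_mul, hy, node]
  generalize N / 2 = m at hcos
  obtain ⟨k, hk | hk⟩ := cos_eq_cos_iff.1 hcos
  · refine ⟨k * N + (m - l), ?_⟩
    push_cast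
    field_simp at hk ⊢
    linarith
  · refine ⟨k * N - (m - l), ?_⟩
    push_cast
    field_simp at hk ⊢
    linarith

lemma exists_perm_eq_add_mul {N : ℕ} {n : Fin N → ℤ}
    (hn : ∀ i j, (N : ℤ) ∣ n i - n j → i = j) :
    ∃ (σ : Equiv.Perm (Fin N)) (q : Fin N → ℤ), ∀ i, n i = (σ i : ℕ) + N * q i := by
  have hmod (i : Fin N) : 0 ≤ n i % N ∧ n i % N < N :=
    ⟨Int.emod_nonneg _ (by have := i.isLt; lia), Int.emod_lt_of_pos _ (by have := i.isLt; lia)⟩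
  let f : Fin N → Fin N := fun i => ⟨(n i % N).toNat, by have := hmod i; lia⟩
  have hf : Function.Injective f := by
    intro i j hij
    refine hn i j (Int.ModEq.dvd ?_)
    have := Fin.ext_iff.1 hij
    simp only [f] at this
    have := hmod i
    have := hmod j
    simp only [Int.ModEq]
    lia
  refine ⟨Equiv.ofBijective f (Finite.injective_iff_bijective.1 hf), fun i => n i / N, fun i => ?_⟩
  rw [Equiv.ofBijective_apply, Int.toNat_of_nonneg (hmod i).1, Int.emod_add_mul_ediv]

lemma equivConfig_halfCircle_of_cos_sq_sub_eq_node {N : ℕ} {x : Fin N → ℝ}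
    (hx : ∀ i j, i ≠ j → cos (x i - x j) ^ 2 < 1)
    (hnode : ∀ i j, i ≠ j → ∃ l, cos (x i - x j) ^ 2 = node N l) :
    EquivConfig 2 N (halfCircle N) fun i => unitVec (x i) := by
  obtain rfl | hN := N.eq_zero_or_pos
  · exact ⟨LinearIsometryEquiv.refl ℝ _, Equiv.refl _, fun _ => 1, fun i => i.elim0,
      fun i => i.elim0⟩
  have hN' : (N : ℝ) ≠ 0 := Nat.cast_ne_zero.2 hN.ne'
  set φ : ℝ := x ⟨0, hN⟩
  have hint (i : Fin N) : ∃ n : ℤ, x i - φ = n * (π / N) := by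
    obtain rfl | hi := eq_or_ne i ⟨0, hN⟩
    · exact ⟨0, by simp [φ]⟩
    · obtain ⟨l, hl⟩ := hnode i _ hi
      exact exists_eq_int_mul_pi_div_of_cos_sq_eq_node hN.ne' hl
  choose n hn using hint
  have hincong (i j : Fin N) (hdvd : (N : ℤ) ∣ n i - n j) : i = j := by
    by_contra hij
    obtain ⟨q, hq⟩ := hdvd
    have hq' : (n i : ℝ) - n j = N * q := by exact_mod_cast hq
    have hsub : x i - x j = q * π := by
      rw [← sub_sub_sub_cancel_right _ _ φ, hn, hn, ← sub_mul, hq']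
      field_simp
    exact (hx i j hij).ne (by rw [hsub, cos_int_mul_pi, ← zpow_natCast, zpow_comm]; simp)
  obtain ⟨σ, q, hσ⟩ := exists_perm_eq_add_mul hincong
  refine ⟨planeRotation φ, σ, fun i => (-1) ^ q i, fun i => ?_, fun i => ?_⟩
  · exact (Int.even_or_odd (q i)).imp (Even.neg_one_zpow ·) (Odd.neg_one_zpow ·)
  · have hxi : x i = φ + halfCircleAngle N (σ i) + q i * π := by
      rw [add_assoc, ← sub_eq_iff_eq_add', hn, hσ, halfCircleAngle]
      push_cast
      field_simp
    simp only [halfCircle_eq_unitVec, planeRotation_unitVec, hxi, unitVec_add_int_mul_pi]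

end PlaneConfigurations

theorem halfCircle_minimizes_gEnergy_general {N : ℕ} {G : ℕ → ℝ → ℝ}
    (hG : IsDerivSeqOn (2 * (N / 2)) G (Set.Ico 0 1))
    (hmon : ∀ k ≤ 2 * (N / 2), ∀ t ∈ Set.Ico (0 : ℝ) 1, 0 ≤ G k t)
    {X : Fin N → EuclideanSpace ℝ (Fin 2)} (hX : ∀ i, ‖X i‖ = 1)
    (hXij : ∀ i j, i ≠ j → |⟪X i, X j⟫| < 1) :
    gEnergy N (G 0) (halfCircle N) ≤ gEnergy N (G 0) X ∧
      ((∀ t ∈ Set.Ioo (0 : ℝ) 1, 0 < G (2 * (N / 2)) t) →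
        gEnergy N (G 0) X = gEnergy N (G 0) (halfCircle N) → EquivConfig 2 N (halfCircle N) X) := by
  choose x hx using fun i => exists_unitVec_eq (hX i)
  obtain rfl : (fun i => unitVec (x i)) = X := funext hx
  have hcos : ∀ i j, i ≠ j → cos (x i - x j) ^ 2 < 1 := fun i j hij => by
    simpa only [sq_lt_one_iff_abs_lt_one, inner_unitVec] using hXij i j hij
  simp only [gEnergy_unitVec, halfCircle_eq_unitVec N]
  refine ⟨angleEnergy_halfCircleAngle_le hG hmon hcos, fun hpos heq => ?_⟩
  refine equivConfig_halfCircle_of_cos_sq_sub_eq_node hcos fun i j hij => ?_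
  obtain ⟨l, -, hl⟩ := exists_cos_sq_sub_eq_node_of_angleEnergy_eq hG hmon hpos hcos heq hij
  exact ⟨l, hl⟩

/-- For `N ≥ 4` and `g` absolutely monotone up to order `2⌊N/2⌋` on `[0,1)`, `X_N^(h)`
minimizes `Σ_{i≠j} g(|⟨x_i,x_j⟩|²)` among `N`-tuples of pairwise non-parallel unit
vectors in `ℝ²`; for strictly absolutely monotone `g` every minimizer is equivalent to
`X_N^(h)`. -/
theorem halfCircle_minimizes_gEnergy
    (N : ℕ) (hN : 4 ≤ N) (g : ℝ → ℝ)
    (hg : ContDiffOn ℝ ((2 * (N / 2) : ℕ)) g (Set.Ico 0 1))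
    (hmon : ∀ k ≤ 2 * (N / 2), ∀ t ∈ Set.Ico (0 : ℝ) 1,
      0 ≤ iteratedDerivWithin k g (Set.Ico 0 1) t) :
    (∀ X : Fin N → EuclideanSpace ℝ (Fin 2),
      (∀ i, ‖X i‖ = 1) → (∀ i j, i ≠ j → |⟪X i, X j⟫| < 1) →
      gEnergy N g (halfCircle N) ≤ gEnergy N g X) ∧
    ((∀ k ≤ 2 * (N / 2), ∀ t ∈ Set.Ioo (0 : ℝ) 1,
        0 < iteratedDerivWithin k g (Set.Ico 0 1) t) →
      ∀ X : Fin N → EuclideanSpace ℝ (Fin 2),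
        (∀ i, ‖X i‖ = 1) → (∀ i j, i ≠ j → |⟪X i, X j⟫| < 1) →
        gEnergy N g X = gEnergy N g (halfCircle N) →
        EquivConfig 2 N (halfCircle N) X) := by
  have hG : IsDerivSeqOn (2 * (N / 2)) (iteratedDerivWithin · g (Set.Ico 0 1)) (Set.Ico 0 1) := by
    intro k hk t ht
    simp only [iteratedDerivWithin_succ]
    exact (hg.differentiableOn_iteratedDerivWithin (by exact_mod_cast hk) (uniqueDiffOn_Ico 0 1) t
      ht).hasDerivWithinAt
  have key := fun X hX hXij => halfCircle_minimizes_gEnergy_general (X := X) hG hmon hX hXij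
  simp only [iteratedDerivWithin_zero] at key
  exact ⟨fun X hX hXij => (key X hX hXij).1,
    fun hpos X hX hXij => (key X hX hXij).2 (hpos _ le_rfl)⟩
end

section
/- Let N ≥ 5 and let p be an even integer with 2 < p ≤ 2N−2 if N is even, and 2 < p ≤ 2N−4 if N is odd. Then X_N^(h) minimizes the p-frame potential: FP_{p,N,2}(X_N^(h)) ≤ FP_{p,N,2}(X) for every X ∈ S(N,2), i.e., FP_{p,N,2}(X_N^(h)) = F_{p,N,2}. -/
open scoped RealInnerProductSpace
open Real

/-- The `p`-frame potential `FP_{p,N,d}(X) = Σ_{k≠ℓ} |⟨x_k,x_ℓ⟩|^p`. -/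
noncomputable def framePotential (d N : ℕ) (p : ℝ)
    (X : Fin N → EuclideanSpace ℝ (Fin d)) : ℝ :=
  ∑ k : Fin N, ∑ l : Fin N, if k ≠ l then |⟪X k, X l⟫| ^ p else 0

/-- `F_{p,N,d}`, the minimum of the `p`-frame potential over `S(N,d)`. -/
noncomputable def minFramePotential (d N : ℕ) (p : ℝ) : ℝ :=
  sInf (framePotential d N p '' {X | ∀ i, ‖X i‖ = 1})

/-!
Identify the plane with `ℂ`. For unit complex numbers `u₁, …, u_N`, expanding
`⟪u k, u l⟫ = (conj (u k) * u l + u k * conj (u l)) / 2` by the binomial theorem turns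
`∑ k, ∑ l, ⟪u k, u l⟫ ^ (2 * m)` into a positive combination of the squared moduli
`‖∑ k, u k ^ a * conj (u k) ^ b‖ ^ 2` with `a + b = 2 * m`. The term `a = b = m` is the same for
all configurations, so it is a lower bound, attained exactly when the other terms vanish. For the
half circle these are geometric sums `∑ k < N, w ^ k` with `w ^ N = 1` and `w ≠ 1` as soon as
`m < N`.
-/

section MixedMoment

open Finset
open scoped ComplexConjugate

/-- The moment of bidegree `(a, b)` in `z` and `conj z` of a finite family of complex numbers,
with counting (not normalized) weights. The power sums of inner products are expressed in terms of
these moments. -/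
noncomputable def mixedMoment {ι : Type*} [Fintype ι] (u : ι → ℂ) (a b : ℕ) : ℂ :=
  ∑ k, u k ^ a * conj (u k) ^ b

variable {ι : Type*} [Fintype ι] {u : ι → ℂ}

lemma ofReal_norm_mixedMoment_sq (u : ι → ℂ) (a b : ℕ) :
    (‖mixedMoment u a b‖ ^ 2 : ℂ) =
      ∑ k, ∑ l, (conj (u k) * u l) ^ a * (u k * conj (u l)) ^ b := by
  rw [← Complex.conj_mul', mixedMoment, map_sum, sum_mul_sum]
  refine sum_congr rfl fun k _ => sum_congr rfl fun l _ => ?_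
  simp only [map_mul, map_pow, Complex.conj_conj]
  ring

lemma ofReal_inner_pow (z w : ℂ) (n : ℕ) :
    ((⟪z, w⟫ ^ n : ℝ) : ℂ) = ∑ ab ∈ antidiagonal n,
      (n.choose ab.1 / 2 ^ n : ℂ) * ((conj z * w) ^ ab.1 * (z * conj w) ^ ab.2) := by
  have inner_eq : (⟪z, w⟫ : ℂ) = (conj z * w + z * conj w) / 2 := by
    rw [Complex.inner, Complex.re_eq_add_conj, map_mul, Complex.conj_conj, mul_comm w, mul_comm _ z]
  rw [Complex.ofReal_pow, inner_eq, div_pow, (Commute.all _ _).add_pow', sum_div]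
  refine sum_congr rfl fun ab _ => ?_
  rw [nsmul_eq_mul]
  ring

theorem sum_sum_inner_pow (u : ι → ℂ) (n : ℕ) :
    ∑ k, ∑ l, ⟪u k, u l⟫ ^ n =
      ∑ ab ∈ antidiagonal n, n.choose ab.1 / 2 ^ n * ‖mixedMoment u ab.1 ab.2‖ ^ 2 := by
  apply Complex.ofReal_injective
  calc ((∑ k, ∑ l, ⟪u k, u l⟫ ^ n : ℝ) : ℂ)
    _ = ∑ k, ∑ l, ∑ ab ∈ antidiagonal n, (n.choose ab.1 / 2 ^ n : ℂ) *
          ((conj (u k) * u l) ^ ab.1 * (u k * conj (u l)) ^ ab.2) := by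
        simp only [Complex.ofReal_sum, ofReal_inner_pow]
    _ = ∑ ab ∈ antidiagonal n, ∑ k, ∑ l, (n.choose ab.1 / 2 ^ n : ℂ) *
          ((conj (u k) * u l) ^ ab.1 * (u k * conj (u l)) ^ ab.2) := by
        simp only [sum_comm (t := antidiagonal n)]
    _ = _ := by
        push_cast
        simp only [ofReal_norm_mixedMoment_sq, mul_sum]

lemma mixedMoment_self (hu : ∀ k, ‖u k‖ = 1) (m : ℕ) : mixedMoment u m m = Fintype.card ι := by
  simp [mixedMoment, ← mul_pow, Complex.mul_conj', hu]

lemma choose_mul_norm_mixedMoment_self_sq (hu : ∀ k, ‖u k‖ = 1) (m : ℕ) :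
    ((2 * m).choose m : ℝ) / 2 ^ (2 * m) * ‖mixedMoment u m m‖ ^ 2 =
      m.centralBinom / 4 ^ m * (Fintype.card ι : ℝ) ^ 2 := by
  rw [mixedMoment_self hu, Complex.norm_natCast, pow_mul, Nat.centralBinom]
  norm_num

theorem le_sum_sum_inner_pow_two_mul (hu : ∀ k, ‖u k‖ = 1) (m : ℕ) :
    m.centralBinom / 4 ^ m * (Fintype.card ι : ℝ) ^ 2 ≤ ∑ k, ∑ l, ⟪u k, u l⟫ ^ (2 * m) := by
  rw [sum_sum_inner_pow, ← choose_mul_norm_mixedMoment_self_sq hu]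
  exact single_le_sum
    (f := fun ab : ℕ × ℕ =>
      ((2 * m).choose ab.1 : ℝ) / 2 ^ (2 * m) * ‖mixedMoment u ab.1 ab.2‖ ^ 2)
    (a := (m, m)) (fun _ _ => by positivity) (by simp [two_mul])

theorem sum_sum_inner_pow_two_mul_eq (hu : ∀ k, ‖u k‖ = 1) {m : ℕ}
    (vanish : ∀ a b, a + b = 2 * m → a ≠ b → mixedMoment u a b = 0) :
    ∑ k, ∑ l, ⟪u k, u l⟫ ^ (2 * m) = m.centralBinom / 4 ^ m * (Fintype.card ι : ℝ) ^ 2 := by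
  rw [sum_sum_inner_pow, ← choose_mul_norm_mixedMoment_self_sq hu]
  refine sum_eq_single_of_mem (m, m) (by simp [two_mul]) ?_
  intro (a, b) hab hne
  rw [HasAntidiagonal.mem_antidiagonal] at hab
  have a_ne_b : a ≠ b := fun h => hne (by rw [Prod.mk.injEq]; omega)
  simp [vanish a b hab a_ne_b]

end MixedMoment

section PrimitiveRoot

open scoped ComplexConjugate

variable {N : ℕ} {ζ : ℂ}

theorem mixedMoment_primitiveRoot_pow (hN : N ≠ 0) (hζ : IsPrimitiveRoot ζ (2 * N)) {a b : ℕ}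
    (even_sub : Even (a - b : ℤ)) (not_dvd : ¬ (2 * N : ℤ) ∣ a - b) :
    mixedMoment (fun k : Fin N => ζ ^ (k : ℕ)) a b = 0 := by
  have norm_ζ : ‖ζ‖ = 1 := hζ.norm'_eq_one (by omega)
  set w : ℂ := ζ ^ (a - b : ℤ) with hw
  have w_ne_one : w ≠ 1 := fun h =>
    not_dvd (by exact_mod_cast (hζ.zpow_eq_one_iff_dvd _).1 h)
  have w_pow : w ^ N = 1 := by
    rw [hw, ← zpow_natCast, ← zpow_mul, hζ.zpow_eq_one_iff_dvd]
    push_cast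
    exact mul_dvd_mul_right even_sub.two_dvd _
  have term_eq (k : ℕ) : (ζ ^ k) ^ a * conj (ζ ^ k) ^ b = w ^ k := by
    rw [hw, zpow_sub₀ (hζ.ne_zero (by omega)), zpow_natCast, zpow_natCast, map_pow,
      ← Complex.inv_eq_conj norm_ζ]
    ring
  simp only [mixedMoment, term_eq]
  rw [Fin.sum_univ_eq_sum_range (w ^ ·), geom_sum_eq w_ne_one, w_pow, sub_self, zero_div]

theorem sum_sum_inner_primitiveRoot_pow (hζ : IsPrimitiveRoot ζ (2 * N)) {m : ℕ} (hm : m < N) :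
    ∑ k : Fin N, ∑ l : Fin N, ⟪ζ ^ (k : ℕ), ζ ^ (l : ℕ)⟫ ^ (2 * m) =
      m.centralBinom / 4 ^ m * (N : ℝ) ^ 2 := by
  have norm_ζ_pow (k : Fin N) : ‖ζ ^ (k : ℕ)‖ = 1 := by
    rw [norm_pow, hζ.norm'_eq_one (by omega), one_pow]
  rw [sum_sum_inner_pow_two_mul_eq norm_ζ_pow, Fintype.card_fin]
  intro a b hab hne
  refine mixedMoment_primitiveRoot_pow (by omega) hζ ⟨a - m, by omega⟩ fun dvd => hne ?_
  have : (a - b : ℤ) = 0 := Int.eq_zero_of_abs_lt_dvd dvd (by rw [abs_lt]; omega)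
  omega

end PrimitiveRoot

section FramePotential

variable {d N : ℕ}

lemma framePotential_eq_of_even {p : ℕ} (hp : Even p) {X : Fin N → EuclideanSpace ℝ (Fin d)}
    (hX : ∀ i, ‖X i‖ = 1) :
    framePotential d N p X = ∑ k, ∑ l, ⟪X k, X l⟫ ^ p - N := by
  have term_eq (k l : Fin N) : (if k ≠ l then |⟪X k, X l⟫| ^ (p : ℝ) else 0) =
      ⟪X k, X l⟫ ^ p - if k = l then 1 else 0 := by
    rcases eq_or_ne k l with rfl | hkl
    · simp [hX]
    · simp [hkl, hp.pow_abs]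
  simp only [framePotential, term_eq, Finset.sum_sub_distrib]
  simp

theorem le_framePotential_two_mul {X : Fin N → EuclideanSpace ℝ (Fin 2)} (hX : ∀ i, ‖X i‖ = 1)
    (m : ℕ) :
    m.centralBinom / 4 ^ m * (N : ℝ) ^ 2 - N ≤ framePotential 2 N (2 * m : ℕ) X := by
  let toComplex := Complex.orthonormalBasisOneI.repr.symm
  have bound := le_sum_sum_inner_pow_two_mul (u := toComplex ∘ X) (by simpa using hX) m
  simp only [Function.comp_apply, LinearIsometryEquiv.inner_map_map, Fintype.card_fin] at bound
  rw [framePotential_eq_of_even (even_two_mul m) hX]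
  exact sub_le_sub_right bound _

lemma norm_halfCircle (k : Fin N) : ‖halfCircle N k‖ = 1 := by
  simp [halfCircle, EuclideanSpace.norm_eq]

lemma halfCircle_eq_repr_exp_pow (k : Fin N) :
    halfCircle N k =
      Complex.orthonormalBasisOneI.repr
        (Complex.exp (2 * π * Complex.I / (2 * N : ℕ)) ^ (k : ℕ)) := by
  have exp_eq : Complex.exp (2 * π * Complex.I / (2 * N : ℕ)) ^ (k : ℕ) =
      Complex.exp ((k * π / N : ℝ) * Complex.I) := by
    rw [← Complex.exp_nat_mul]
    congr 1
    push_cast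
    field_simp
  rw [exp_eq]
  ext i
  fin_cases i
  · exact (Complex.exp_ofReal_mul_I_re _).symm
  · exact (Complex.exp_ofReal_mul_I_im _).symm

theorem framePotential_halfCircle_two_mul {m : ℕ} (hm : m < N) :
    framePotential 2 N (2 * m : ℕ) (halfCircle N) =
      m.centralBinom / 4 ^ m * (N : ℝ) ^ 2 - N := by
  rw [framePotential_eq_of_even (even_two_mul m) norm_halfCircle]
  simp only [halfCircle_eq_repr_exp_pow, LinearIsometryEquiv.inner_map_map]
  rw [sum_sum_inner_primitiveRoot_pow (Complex.isPrimitiveRoot_exp (2 * N) (by omega)) hm]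

theorem framePotential_eq_minFramePotential {p : ℝ} {Y : Fin N → EuclideanSpace ℝ (Fin d)}
    (hY : ∀ i, ‖Y i‖ = 1)
    (le : ∀ X : Fin N → EuclideanSpace ℝ (Fin d), (∀ i, ‖X i‖ = 1) →
      framePotential d N p Y ≤ framePotential d N p X) :
    framePotential d N p Y = minFramePotential d N p := by
  have least : IsLeast (framePotential d N p '' {X | ∀ i, ‖X i‖ = 1}) (framePotential d N p Y) :=
    ⟨Set.mem_image_of_mem _ hY, Set.forall_mem_image.2 le⟩
  exact least.csInf_eq.symm

theorem halfCircle_minimizer_even_p_general {p : ℕ} (hpe : Even p) (hpN : p < 2 * N) :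
    (∀ X : Fin N → EuclideanSpace ℝ (Fin 2), (∀ i, ‖X i‖ = 1) →
      framePotential 2 N (p : ℝ) (halfCircle N) ≤ framePotential 2 N (p : ℝ) X) ∧
    framePotential 2 N (p : ℝ) (halfCircle N) = minFramePotential 2 N (p : ℝ) := by
  obtain ⟨m, rfl⟩ := hpe.exists_two_nsmul
  rw [smul_eq_mul] at hpN ⊢
  have minimal (X : Fin N → EuclideanSpace ℝ (Fin 2)) (hX : ∀ i, ‖X i‖ = 1) :
      framePotential 2 N (2 * m : ℕ) (halfCircle N) ≤ framePotential 2 N (2 * m : ℕ) X :=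
    (framePotential_halfCircle_two_mul (by omega)).trans_le (le_framePotential_two_mul hX m)
  exact ⟨minimal, framePotential_eq_minFramePotential norm_halfCircle minimal⟩

end FramePotential

/-- For `N ≥ 5` and an even integer `p` with `2 < p ≤ 2N−2` (`N` even) resp.
`2 < p ≤ 2N−4` (`N` odd), `X_N^(h)` minimizes the `p`-frame potential `FP_{p,N,2}`,
i.e. `FP_{p,N,2}(X_N^(h)) = F_{p,N,2}`. -/
theorem halfCircle_minimizer_even_p
    (N : ℕ) (hN : 5 ≤ N) (p : ℕ) (hpe : Even p) (hp2 : 2 < p)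
    (hpeven : Even N → p ≤ 2 * N - 2)
    (hpodd : ¬ Even N → p ≤ 2 * N - 4) :
    (∀ X : Fin N → EuclideanSpace ℝ (Fin 2), (∀ i, ‖X i‖ = 1) →
      framePotential 2 N (p : ℝ) (halfCircle N) ≤ framePotential 2 N (p : ℝ) X) ∧
    framePotential 2 N (p : ℝ) (halfCircle N) = minFramePotential 2 N (p : ℝ) := by
  exact halfCircle_minimizer_even_p_general hpe (by grind)
end
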